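/- There is no MSTD pair (A,B) of finite sets of integers with |A| = 3 and |B| = 4: for any such A, B, |A+B| ≤ |(A−B) ∪ (B−A)|. -/

import Mathlib

open Pointwise

/-- membership in the nine-element list `(P+P) ∪ (P+u)` with `P = {0,p,q}` -/
def InF (p q u x : ℤ) : Prop :=
  x = 0 ∨ x = p ∨ x = q ∨ x = 2*p ∨ x = p+q ∨ x = 2*q ∨ x = u ∨ x = u+p ∨ x = u+q

theorem InF_cases (p q u m : ℤ) (hp : 0 < p) (hpq : p < q) (hne : q ≠ 2*p)
    (h0 : u ≠ 0) (h1 : u ≠ p) (h2 : u ≠ q)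
    (h : ∀ x, InF p q u x → InF p q u (m - x)) :
    (q = 3*p ∧ u = 2*p) ∨ (2*q = 3*p ∧ u = q-p) ∨ (2*q = 3*p ∧ u = p-q) ∨
    (q = 3*p ∧ u = p+q) := by
  have e0 := h 0 (by simp [InF])
  have e1 := h p (by simp [InF])
  have e2 := h q (by simp [InF])
  have e3 := h (2*p) (by simp [InF])
  have e4 := h (p+q) (by simp [InF])
  have e5 := h (2*q) (by simp [InF])
  have e6 := h u (by simp [InF])
  have e7 := h (u+p) (by simp [InF])
  have e8 := h (u+q) (by simp [InF])
  clear h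
  unfold InF at *
  rcases lt_or_gt_of_ne h0 with hu | hu
  · have hm1 : m ≤ u + 2*q := by clear e0 e1 e2 e3 e4 e5 e7 e8; omega
    have hm2 : u + 2*q ≤ m := by clear e0 e1 e2 e3 e4 e6 e7 e8; omega
    obtain rfl : m = u + 2*q := le_antisymm hm1 hm2
    have hu' : u = p - q := by
      clear e1 e2 e3 e5 e6 e8 hm1 hm2
      rcases e4 with e | e | e | e | e | e | e | e | e <;> first | omega | skip
    clear e0 e1 e2 e3 e4 e5 e6 e8
    subst hu'
    omega
  rcases lt_or_gt_of_ne h2 with hq | hq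
  · have hm1 : m ≤ 2*q := by clear e1 e2 e3 e4 e5 e6 e7 e8; omega
    have hm2 : 2*q ≤ m := by clear e0 e1 e2 e3 e4 e6 e7 e8; omega
    obtain rfl : m = 2*q := le_antisymm hm1 hm2
    have hu' : u = q - p := by
      clear e0 e2 e3 e5 e6 e7 e8
      omega
    clear e0 e1 e2 e4 e5 e6 e7 e8
    subst hu'
    omega
  · have hm1 : m ≤ u + q := by clear e1 e2 e3 e4 e5 e6 e7 e8; omega
    have hm2 : u + q ≤ m := by clear e0 e1 e2 e3 e4 e5 e6 e7; omega
    obtain rfl : m = u + q := le_antisymm hm1 hm2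
    have hu' : u = p + q := by
      clear e0 e2 e4 e5 e6 e8 hm1 hm2
      rcases e1 with e | e | e | e | e | e | e | e | e <;> first | omega | skip
    clear e0 e1 e2 e4 e5 e6 e8
    subst hu'
    omega

/-- `f` has fibres of size 1, 2, 3 over its image: inclusion-exclusion count. -/
theorem count_image (P : Finset (ℤ × ℤ)) (f : ℤ × ℤ → ℤ)
    (h3 : ∀ x, (P.filter (fun z => f z = x)).card ≤ 3) :
    (2 * (P.image f).card : ℤ) = 3 * P.card
      - ((P ×ˢ P).filter (fun z => f z.1 = f z.2)).card
      + 2 * ((P.image f).filter (fun x => (P.filter (fun z => f z = x)).card = 3)).card := by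
  have hc : (P.card : ℤ) = ∑ x ∈ P.image f, ((P.filter (fun z => f z = x)).card : ℤ) := by
    exact_mod_cast Finset.card_eq_sum_card_image f P
  have hE : (((P ×ˢ P).filter (fun z => f z.1 = f z.2)).card : ℤ)
      = ∑ x ∈ P.image f, ((P.filter (fun z => f z = x)).card : ℤ)^2 := by
    rw [Finset.card_eq_sum_card_fiberwise (f := fun z => f z.1) (t := P.image f)]
    · push_cast
      refine Finset.sum_congr rfl fun x _ => ?_
      rw [sq, ← Nat.cast_mul, ← Finset.card_product]
      congr 2
      ext z
      simp only [Finset.mem_filter, Finset.mem_product]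
      constructor
      · rintro ⟨⟨⟨a, b⟩, c⟩, d⟩; exact ⟨⟨a, d⟩, b, c ▸ d⟩
      · rintro ⟨⟨a, d⟩, b, e⟩; exact ⟨⟨⟨a, b⟩, d.trans e.symm⟩, d⟩
    · intro z hz
      simp only [Finset.coe_filter, Finset.mem_product, Set.mem_ofPred_eq] at hz
      exact Finset.mem_coe.2 (Finset.mem_image_of_mem _ hz.1.1)
  rw [hc, hE, Finset.card_filter, Finset.card_eq_sum_ones]
  push_cast
  rw [Finset.mul_sum, Finset.mul_sum, Finset.mul_sum, ← Finset.sum_sub_distrib,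
    ← Finset.sum_add_distrib]
  refine Finset.sum_congr rfl fun x hx => ?_
  have hpos : 0 < (P.filter (fun z => f z = x)).card := by
    obtain ⟨z, hz, rfl⟩ := Finset.mem_image.1 hx
    exact Finset.card_pos.2 ⟨z, by simp [hz]⟩
  have := h3 x
  generalize (P.filter (fun z => f z = x)).card = r at *
  interval_cases r <;> simp

theorem fib_add (A B : Finset ℤ) (x : ℤ) :
    ((A ×ˢ B).filter (fun z => z.1 + z.2 = x)).card = (A.filter (fun a => x - a ∈ B)).card := by
  refine Finset.card_bij (fun z _ => z.1) ?_ ?_ ?_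
  · rintro ⟨a, b⟩ h
    simp only [Finset.mem_filter, Finset.mem_product] at h ⊢
    obtain ⟨⟨h1, h2⟩, h3⟩ := h
    exact ⟨h1, by rwa [← h3, add_sub_cancel_left]⟩
  · rintro ⟨a, b⟩ h ⟨c, d⟩ h' e
    simp only [Finset.mem_filter, Finset.mem_product] at h h' e
    ext <;> simp <;> omega
  · intro a h
    simp only [Finset.mem_filter] at h
    exact ⟨(a, x - a), by simp [h], rfl⟩

theorem fib_sub (A B : Finset ℤ) (x : ℤ) :
    ((A ×ˢ B).filter (fun z => z.1 - z.2 = x)).card = (A.filter (fun a => a - x ∈ B)).card := by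
  refine Finset.card_bij (fun z _ => z.1) ?_ ?_ ?_
  · rintro ⟨a, b⟩ h
    simp only [Finset.mem_filter, Finset.mem_product] at h ⊢
    obtain ⟨⟨h1, h2⟩, h3⟩ := h
    exact ⟨h1, by rwa [← h3, sub_sub_cancel]⟩
  · rintro ⟨a, b⟩ h ⟨c, d⟩ h' e
    simp only [Finset.mem_filter, Finset.mem_product] at h h' e
    ext <;> simp <;> omega
  · intro a h
    simp only [Finset.mem_filter] at h
    exact ⟨(a, a - x), by simp [h], rfl⟩

theorem filt_three (A : Finset ℤ) (hA : A.card = 3) (p : ℤ → Prop) [DecidablePred p] :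
    (A.filter p).card = 3 ↔ ∀ a ∈ A, p a := by
  rw [← hA, Finset.card_filter_eq_iff]

theorem energy_eq (A B : Finset ℤ) :
    ((((A ×ˢ B) ×ˢ (A ×ˢ B)).filter (fun z => z.1.1 + z.1.2 = z.2.1 + z.2.2)).card)
    = ((((A ×ˢ B) ×ˢ (A ×ˢ B)).filter (fun z => z.1.1 - z.1.2 = z.2.1 - z.2.2)).card) := by
  refine Finset.card_bij' (fun z _ => ((z.1.1, z.2.2), (z.2.1, z.1.2)))
    (fun z _ => ((z.1.1, z.2.2), (z.2.1, z.1.2))) ?_ ?_ ?_ ?_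
  · intro z h
    simp only [Finset.mem_filter, Finset.mem_product] at h ⊢
    refine ⟨⟨⟨h.1.1.1, h.1.2.2⟩, h.1.2.1, h.1.1.2⟩, by omega⟩
  · intro z h
    simp only [Finset.mem_filter, Finset.mem_product] at h ⊢
    refine ⟨⟨⟨h.1.1.1, h.1.2.2⟩, h.1.2.1, h.1.1.2⟩, by omega⟩
  · intro z h; rfl
  · intro z h; rfl

theorem key (A B : Finset ℤ) (hA : A.card = 3) :
    (A + B).card + ((A - B).filter (fun x => ∀ a ∈ A, a - x ∈ B)).card
    = (A - B).card + ((A + B).filter (fun x => ∀ a ∈ A, x - a ∈ B)).card := by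
  have h1 := count_image (A ×ˢ B) (fun z => z.1 + z.2) (fun x => by
    rw [fib_add, ← hA]; exact Finset.card_filter_le _ _)
  have h2 := count_image (A ×ˢ B) (fun z => z.1 - z.2) (fun x => by
    rw [fib_sub, ← hA]; exact Finset.card_filter_le _ _)
  have e1 : (A ×ˢ B).image (fun z => z.1 + z.2) = A + B := rfl
  have e2 : (A ×ˢ B).image (fun z => z.1 - z.2) = A - B := rfl
  have e3 := energy_eq A B
  simp only [fib_add, fib_sub, filt_three A hA, e1, e2] at h1 h2
  omega

theorem exists_sorted (A : Finset ℤ) (hA : A.card = 3) :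
    ∃ a p q : ℤ, 0 < p ∧ p < q ∧ A = {a, a + p, a + q} := by
  let f := A.orderEmbOfFin hA
  have h01 : f 0 < f 1 := f.strictMono (by decide)
  have h12 : f 1 < f 2 := f.strictMono (by decide)
  refine ⟨f 0, f 1 - f 0, f 2 - f 0, by omega, by omega, ?_⟩
  symm
  apply Finset.eq_of_subset_of_card_le
  · intro x hx
    simp only [Finset.mem_insert, Finset.mem_singleton, add_sub_cancel] at hx
    rcases hx with rfl | rfl | rfl <;> exact A.orderEmbOfFin_mem hA _
  · rw [hA, Finset.card_eq_three.2 ⟨f 0, f 1, f 2, by omega, by omega, by omega, by simp⟩]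

theorem stmt5 (A B : Finset ℤ) (hA : A.card = 3) (hB : B.card = 4) :
    (A + B).card ≤ ((A - B) ∪ (B - A)).card := by
  have hk := key A B hA
  by_contra! hlt
  have hle : (A - B).card ≤ ((A - B) ∪ (B - A)).card := Finset.card_le_card Finset.subset_union_left
  obtain ⟨a, p, q, hp, hpq, rfl⟩ := exists_sorted A hA
  set A : Finset ℤ := {a, a + p, a + q} with hAdef
  have mA : ∀ x, x ∈ A ↔ x = a ∨ x = a + p ∨ x = a + q := by intro x; simp [hAdef]
  -- a full sum exists
  have hS : 0 < ((A + B).filter (fun x => ∀ a ∈ A, x - a ∈ B)).card := by omega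
  obtain ⟨s, hs⟩ := Finset.card_pos.1 hS
  have hs' := (Finset.mem_filter.1 hs).2
  -- A is not symmetric
  have hne : q ≠ 2 * p := by
    intro hq
    have : ((A + B).filter (fun x => ∀ a ∈ A, x - a ∈ B)).card
        ≤ ((A - B).filter (fun x => ∀ a ∈ A, a - x ∈ B)).card := by
      refine Finset.card_le_card_of_injOn (fun x => 2 * a + q - x) ?_ ?_
      · intro x hx
        have hx' := (Finset.mem_filter.1 hx).2
        have i1 := hx' a (by simp [mA])
        have i2 := hx' (a + p) (by simp [mA])
        have i3 := hx' (a + q) (by simp [mA])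
        simp only [Finset.coe_filter, Set.mem_ofPred_eq]
        refine ⟨Finset.mem_sub.2 ⟨a, by simp [mA], x - (a + q), i3, by ring⟩, ?_⟩
        intro y hy
        rcases (mA y).1 hy with rfl | rfl | rfl
        · convert i3 using 1; ring
        · convert i2 using 1; rw [hq]; ring
        · convert i1 using 1; ring
      · intro x _ y _ h
        simp only at h
        omega
    omega
  -- shape of B
  have hsub : ({s - a, s - (a + p), s - (a + q)} : Finset ℤ) ⊆ B := by
    intro x hx
    simp only [Finset.mem_insert, Finset.mem_singleton] at hx
    rcases hx with rfl | rfl | rfl <;> exact hs' _ (by simp [mA])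
  have hc3 : ({s - a, s - (a + p), s - (a + q)} : Finset ℤ).card = 3 :=
    Finset.card_eq_three.2 ⟨_, _, _, by omega, by omega, by omega, rfl⟩
  obtain ⟨w, hw, hBw⟩ : ∃ w, w ∉ ({s - a, s - (a + p), s - (a + q)} : Finset ℤ) ∧
      insert w ({s - a, s - (a + p), s - (a + q)} : Finset ℤ) = B := by
    have hd : (B \ {s - a, s - (a + p), s - (a + q)}).card = 1 := by
      rw [Finset.card_sdiff_of_subset hsub, hB, hc3]
    obtain ⟨w, hw⟩ := Finset.card_eq_one.1 hd
    have hwm : w ∈ B \ {s - a, s - (a + p), s - (a + q)} := by rw [hw]; simp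
    refine ⟨w, (Finset.mem_sdiff.1 hwm).2, ?_⟩
    rw [Finset.insert_eq, ← hw, Finset.sdiff_union_of_subset hsub]
  have mB : ∀ x, x ∈ B ↔ x = w ∨ x = s - a ∨ x = s - (a + p) ∨ x = s - (a + q) := by
    intro x; rw [← hBw]; simp
  simp only [Finset.mem_insert, Finset.mem_singleton, not_or] at hw
  obtain ⟨w1, w2, w3⟩ := hw
  -- uniqueness of the full sum
  have hS1 : ((A + B).filter (fun x => ∀ a ∈ A, x - a ∈ B)).card ≤ 1 := by
    have huniq : ∀ t ∈ ((A + B).filter (fun x => ∀ a ∈ A, x - a ∈ B)), t = s := by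
      intro t ht
      have ht' := (Finset.mem_filter.1 ht).2
      have i1 := (mB _).1 (ht' a (by simp [mA]))
      have i2 := (mB _).1 (ht' (a + p) (by simp [mA]))
      have i3 := (mB _).1 (ht' (a + q) (by simp [mA]))
      clear * - i1 i2 i3 hp hpq hne w1 w2 w3
      omega
    exact Finset.card_le_one.2 fun x hx y hy => (huniq x hx).trans (huniq y hy).symm
  have hD0 : ((A - B).filter (fun x => ∀ a ∈ A, a - x ∈ B)).card = 0 := by omega
  have hDeq : A - B = (A - B) ∪ (B - A) :=
    Finset.eq_of_subset_of_card_le Finset.subset_union_left (by omega)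
  have hno : ∀ x, a - x ∈ B → a + p - x ∈ B → a + q - x ∈ B → False := by
    intro x i1 i2 i3
    have : x ∈ ((A - B).filter (fun x => ∀ a ∈ A, a - x ∈ B)) := by
      refine Finset.mem_filter.2 ⟨Finset.mem_sub.2 ⟨a, by simp [mA], a - x, i1, by ring⟩, ?_⟩
      intro y hy
      rcases (mA y).1 hy with rfl | rfl | rfl <;> assumption
    rw [Finset.card_eq_zero.1 hD0] at this
    simp at this
  have mD : ∀ x, x ∈ A - B ↔ InF p q (s - w - a) (x - (2 * a - s)) := by
    intro x
    rw [Finset.mem_sub]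
    unfold InF
    constructor
    · rintro ⟨y, hy, z, hz, rfl⟩
      rw [mA] at hy
      rw [mB] at hz
      clear * - hy hz
      omega
    · have M : ∀ y z, y ∈ A → z ∈ B → x = y - z → ∃ y ∈ A, ∃ z ∈ B, y - z = x :=
        fun y z hy hz h => ⟨y, hy, z, hz, h.symm⟩
      rintro (h | h | h | h | h | h | h | h | h)
      · exact M a (s - a) (by simp [mA]) (by simp [mB]) (by omega)
      · exact M a (s - (a + p)) (by simp [mA]) (by simp [mB]) (by omega)
      · exact M a (s - (a + q)) (by simp [mA]) (by simp [mB]) (by omega)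
      · exact M (a + p) (s - (a + p)) (by simp [mA]) (by simp [mB]) (by omega)
      · exact M (a + p) (s - (a + q)) (by simp [mA]) (by simp [mB]) (by omega)
      · exact M (a + q) (s - (a + q)) (by simp [mA]) (by simp [mB]) (by omega)
      · exact M a w (by simp [mA]) (by simp [mB]) (by omega)
      · exact M (a + p) w (by simp [mA]) (by simp [mB]) (by omega)
      · exact M (a + q) w (by simp [mA]) (by simp [mB]) (by omega)
  have hneg : ∀ x ∈ A - B, -x ∈ A - B := by
    intro x hx
    rw [hDeq]
    refine Finset.mem_union_right _ ?_
    obtain ⟨y, hy, z, hz, rfl⟩ := Finset.mem_sub.1 hx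
    exact Finset.mem_sub.2 ⟨z, hz, y, hy, by ring⟩
  have hfin := InF_cases p q (s - w - a) (-2 * (2 * a - s)) hp hpq hne (by omega) (by omega)
    (by omega) (by
      intro x hx
      have h1 : x + (2 * a - s) ∈ A - B := by rw [mD]; simpa using hx
      have h2 := (mD _).1 (hneg _ h1)
      convert h2 using 1; ring)
  simp only [mB] at hno
  rcases hfin with ⟨h1, h2⟩ | ⟨h1, h2⟩ | ⟨h1, h2⟩ | ⟨h1, h2⟩
  · exact hno (a - (s - (a + q))) (by omega) (by omega) (by omega)
  · exact hno (a - (s - (a + q))) (by omega) (by omega) (by omega)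
  · exact hno (a - (s - (a + p))) (by omega) (by omega) (by omega)
  · exact hno (a - w) (by omega) (by omega) (by omega)
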